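/- Let D = (V, E; c; s, t) be a flow network in which every arc belongs to at least one s-t path. If the flow game Γ_D is convex, then every non-bottleneck arc e ∉ B satisfies c(e) ≥ Σ_{P ∈ 𝒫_e} c(P), i.e., its capacity accommodates the aggregate capacity of all s-t paths passing through it. -/

import Mathlib

open scoped Classical
open Finset

noncomputable section

/-- The arcs (consecutive vertex pairs) of a vertex list. -/
def arcsOf {V : Type*} [DecidableEq V] (vs : List V) : Finset (V × V) :=
  (vs.zip vs.tail).toFinset

/-- `vs` is the vertex list of a directed path from `a` to `b` using arcs of `E`,
with pairwise distinct vertices. -/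
def IsPathList {V : Type*} (E : Finset (V × V)) (a b : V) (vs : List V) : Prop :=
  vs.Nodup ∧ vs.head? = some a ∧ vs.getLast? = some b ∧
    vs.Chain' (fun x y => (x, y) ∈ E)

/-- `P` is (the arc set of) an `s`-`t` path in the network with arc set `E`. -/
def IsSTPath {V : Type*} [DecidableEq V] (E : Finset (V × V)) (s t : V)
    (P : Finset (V × V)) : Prop :=
  ∃ vs : List V, IsPathList E s t vs ∧ P = arcsOf vs

/-- The capacity of a path (arc set): the minimum capacity of its arcs. -/
def pathCap {V : Type*} (c : V × V → ℝ) (P : Finset (V × V)) : ℝ :=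
  sInf (c '' (P : Set (V × V)))

/-- `e` is a bottleneck arc of some `s`-`t` path, i.e. `e ∈ B`. -/
def IsBottleneck {V : Type*} [DecidableEq V] (E : Finset (V × V)) (c : V × V → ℝ)
    (s t : V) (e : V × V) : Prop :=
  ∃ P : Finset (V × V), IsSTPath E s t P ∧ e ∈ P ∧ c e = pathCap c P

/-- The finite set `𝒫` of all `s`-`t` paths (as arc sets). -/
def stPaths {V : Type*} [DecidableEq V] (E : Finset (V × V)) (s t : V) :
    Finset (Finset (V × V)) :=
  E.powerset.filter (fun P => IsSTPath E s t P)

/-- The value of a flow `f`: net flow out of the source `s`. -/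
def flowValue {V : Type*} [DecidableEq V] (E : Finset (V × V)) (s : V)
    (f : V × V → ℝ) : ℝ :=
  ∑ e ∈ E.filter (fun e => e.1 = s), f e - ∑ e ∈ E.filter (fun e => e.2 = s), f e

/-- `f` is a feasible flow on the coalition `S`. -/
def IsFeasibleFlow {V : Type*} [DecidableEq V] (E : Finset (V × V)) (c : V × V → ℝ)
    (s t : V) (S : Finset (V × V)) (f : V × V → ℝ) : Prop :=
  (∀ e ∈ E, 0 ≤ f e ∧ f e ≤ c e) ∧
  (∀ e, e ∉ S → f e = 0) ∧
  (∀ v, v ≠ s → v ≠ t →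
    ∑ e ∈ E.filter (fun e => e.2 = v), f e = ∑ e ∈ E.filter (fun e => e.1 = v), f e)

/-- `γ` is the characteristic function of the flow game on `D = (V,E;c;s,t)`:
for each coalition `S ⊆ E`, `γ S` is the maximum value of a feasible flow on `S`. -/
def IsFlowGame {V : Type*} [DecidableEq V] (E : Finset (V × V)) (c : V × V → ℝ)
    (s t : V) (γ : Finset (V × V) → ℝ) : Prop :=
  ∀ S : Finset (V × V), S ⊆ E →
    IsGreatest {x : ℝ | ∃ f, IsFeasibleFlow E c s t S f ∧ flowValue E s f = x} (γ S)

/-- The cooperative game `γ` with player set `E` is convex (supermodular). -/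
def GameConvex {V : Type*} [DecidableEq V] (E : Finset (V × V))
    (γ : Finset (V × V) → ℝ) : Prop :=
  ∀ e ∈ E, ∀ S T : Finset (V × V), S ⊆ T → T ⊆ E.erase e →
    γ (insert e S) - γ S ≤ γ (insert e T) - γ T

/-- The directed graph with arc set `E` contains a directed cycle. -/
def HasDirectedCycle {V : Type*} (E : Finset (V × V)) : Prop :=
  ∃ (v : V) (vs : List V), (v :: vs).Nodup ∧
    (v :: vs).Chain' (fun x y => (x, y) ∈ E) ∧
    ((v :: vs).getLast (List.cons_ne_nil v vs), v) ∈ E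

theorem arcsOf_cons {V : Type*} [DecidableEq V] (a b : V) (l : List V) :
    arcsOf (a :: b :: l) = insert (a, b) (arcsOf (b :: l)) := by
  simp [arcsOf]

theorem arcsOf_single {V : Type*} [DecidableEq V] (a : V) :
    arcsOf [a] = ∅ := by
  simp [arcsOf]

theorem mem_of_arcsOf {V : Type*} [DecidableEq V] (l : List V) (e : V × V)
    (h : e ∈ arcsOf l) : e.1 ∈ l ∧ e.2 ∈ l := by
  rcases e with ⟨x, y⟩
  simp only [arcsOf, List.mem_toFinset] at h
  have := List.of_mem_zip h
  exact ⟨this.1, List.mem_of_mem_tail this.2⟩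

theorem chain_iff_arcs {V : Type*} [DecidableEq V] (S : Finset (V × V)) (l : List V) :
    l.Chain' (fun x y => (x, y) ∈ S) ↔ arcsOf l ⊆ S := by
  change l.IsChain _ ↔ _
  induction l with
  | nil => simp [arcsOf]
  | cons a l ih =>
    cases l with
    | nil => simp [arcsOf]
    | cons b l =>
      rw [List.isChain_cons_cons, arcsOf_cons, Finset.insert_subset_iff, ih]

theorem mem_stPaths {V : Type*} [DecidableEq V] (S : Finset (V × V)) (s t : V)
    (P : Finset (V × V)) :
    P ∈ stPaths S s t ↔ P ⊆ S ∧ ∃ vs : List V, vs.Nodup ∧ vs.head? = some s ∧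
      vs.getLast? = some t ∧ P = arcsOf vs := by
  simp only [stPaths, IsSTPath, IsPathList, Finset.mem_filter, Finset.mem_powerset,
    chain_iff_arcs]
  constructor
  · rintro ⟨h, vs, ⟨h1, h2, h3, h4⟩, h5⟩
    exact ⟨h, vs, h1, h2, h3, h5⟩
  · rintro ⟨h, vs, h1, h2, h3, h5⟩
    exact ⟨h, vs, ⟨h1, h2, h3, h5 ▸ h⟩, h5⟩

theorem arcs_tail_unique {V : Type*} [DecidableEq V] (l : List V) (hl : l.Nodup)
    (v w w' : V) (h : (v, w) ∈ arcsOf l) (h' : (v, w') ∈ arcsOf l) : w = w' := by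
  induction l with
  | nil => simp [arcsOf] at h
  | cons a l ih =>
    cases l with
    | nil => simp [arcsOf] at h
    | cons b l =>
      rw [arcsOf_cons, Finset.mem_insert] at h h'
      rw [List.nodup_cons] at hl
      rcases h with h | h <;> rcases h' with h' | h'
      · simp_all
      · have := (mem_of_arcsOf _ _ h').1
        simp only [Prod.mk.injEq] at h
        rw [h.1] at this
        exact absurd this hl.1
      · have := (mem_of_arcsOf _ _ h).1
        simp only [Prod.mk.injEq] at h'
        rw [h'.1] at this
        exact absurd this hl.1
      · exact ih hl.2 h h'

theorem arcs_diverge {V : Type*} [DecidableEq V] (t : V) (l1 : List V) :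
    ∀ (a : V) (l2 : List V), (a :: l1).Nodup → (a :: l2).Nodup →
      (a :: l1).getLast? = some t → (a :: l2).getLast? = some t →
      l1 = l2 ∨ ∃ v w w', w ≠ w' ∧ (v, w) ∈ arcsOf (a :: l1) ∧ (v, w') ∈ arcsOf (a :: l2) := by
  induction l1 with
  | nil =>
    intro a l2 _ h2 h3 h4
    cases l2 with
    | nil => exact Or.inl rfl
    | cons b l =>
      exfalso
      rw [List.getLast?_cons_cons] at h4
      have := List.mem_of_getLast? h4
      simp only [List.getLast?_singleton, Option.some.injEq] at h3
      rw [List.nodup_cons] at h2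
      exact h2.1 (h3 ▸ this)
  | cons x l1 ih =>
    intro a l2 h1 h2 h3 h4
    cases l2 with
    | nil =>
      exfalso
      rw [List.getLast?_cons_cons] at h3
      have := List.mem_of_getLast? h3
      simp only [List.getLast?_singleton, Option.some.injEq] at h4
      rw [List.nodup_cons] at h1
      exact h1.1 (h4 ▸ this)
    | cons y l2 =>
      by_cases hxy : x = y
      · subst hxy
        rw [List.nodup_cons] at h1 h2
        rw [List.getLast?_cons_cons] at h3 h4
        rcases ih x l2 h1.2 h2.2 h3 h4 with h | ⟨v, w, w', h, h', h''⟩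
        · left; rw [h]
        · right
          refine ⟨v, w, w', h, ?_, ?_⟩ <;> rw [arcsOf_cons] <;> simp [*]
      · right
        refine ⟨a, x, y, hxy, ?_, ?_⟩ <;> rw [arcsOf_cons] <;> simp

/-- signed incidence of the arc e at v -/
def inc {V : Type*} [DecidableEq V] (v : V) (e : V × V) : ℝ :=
  (if e.1 = v then 1 else 0) - (if e.2 = v then 1 else 0)

theorem path_net {V : Type*} [DecidableEq V] (t v : V) (l : List V) :
    ∀ (a : V), (a :: l).Nodup → (a :: l).getLast? = some t →
      ∑ e ∈ arcsOf (a :: l), inc v e = (if a = v then 1 else 0) - (if t = v then 1 else 0) := by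
  induction l with
  | nil =>
    intro a _ h
    simp only [List.getLast?_singleton, Option.some.injEq] at h
    simp [arcsOf, h]
  | cons b l ih =>
    intro a h1 h2
    rw [List.nodup_cons] at h1
    rw [List.getLast?_cons_cons] at h2
    rw [arcsOf_cons, Finset.sum_insert, ih b h1.2 h2]
    · simp [inc]
    · intro h
      exact h1.1 (mem_of_arcsOf _ _ h).1

def net {V : Type*} [DecidableEq V] (E : Finset (V × V)) (f : V × V → ℝ) (v : V) : ℝ :=
  ∑ e ∈ E, f e * inc v e

theorem net_eq {V : Type*} [DecidableEq V] (E : Finset (V × V)) (f : V × V → ℝ) (v : V) :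
    net E f v = ∑ e ∈ E.filter (fun e => e.1 = v), f e
      - ∑ e ∈ E.filter (fun e => e.2 = v), f e := by
  simp only [net, inc, mul_sub, Finset.sum_sub_distrib, mul_ite, mul_one, mul_zero,
    Finset.sum_filter]

theorem net_path {V : Type*} [DecidableEq V] (E : Finset (V × V)) (s t v : V)
    (P : Finset (V × V)) (hP : P ∈ stPaths E s t) (m : ℝ) :
    net E (fun e => if e ∈ P then m else 0) v
      = m * ((if s = v then 1 else 0) - (if t = v then 1 else 0)) := by
  obtain ⟨hPE, vs, h1, h2, h3, h4⟩ := (mem_stPaths _ _ _ _).1 hP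
  cases vs with
  | nil => simp at h2
  | cons a l =>
    simp only [List.head?_cons, Option.some.injEq] at h2
    subst h2
    rw [← path_net t v l a h1 h3, ← h4, Finset.mul_sum, net]
    simp only [ite_mul, zero_mul]
    rw [← Finset.sum_filter, Finset.filter_mem_eq_inter, Finset.inter_eq_right.2 hPE]

theorem stPath_nonempty {V : Type*} [DecidableEq V] (E : Finset (V × V)) (s t : V) (hst : s ≠ t)
    (P : Finset (V × V)) (hP : P ∈ stPaths E s t) : P.Nonempty := by
  obtain ⟨hPE, vs, h1, h2, h3, h4⟩ := (mem_stPaths _ _ _ _).1 hP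
  match vs, h2, h3, h4 with
  | [], h2, _, _ => simp at h2
  | [a], h2, h3, _ =>
    simp at h2 h3
    exact absurd (h2.symm.trans h3) hst
  | a :: b :: l, _, _, h4 =>
    rw [h4, arcsOf_cons]
    exact Finset.insert_nonempty _ _

theorem exists_path {V : Type*} [DecidableEq V] (S : Finset (V × V)) (s t : V)
    (h : Relation.ReflTransGen (fun x y => (x, y) ∈ S) s t) :
    ∃ l : List V, (s :: l).Nodup ∧ (s :: l).getLast? = some t ∧
      (s :: l).IsChain (fun x y => (x, y) ∈ S) := by
  induction h using Relation.ReflTransGen.head_induction_on with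
  | refl => exact ⟨[], by simp⟩
  | head hab hbt ih =>
    rename_i a b
    obtain ⟨l, h1, h2, h3⟩ := ih
    by_cases ha : a ∈ b :: l
    · obtain ⟨l1, l2, h⟩ := List.append_of_mem ha
      refine ⟨l2, ?_, ?_, ?_⟩
      · rw [h] at h1
        exact (List.nodup_append.1 h1).2.1
      · rw [h] at h2
        simpa [List.getLast?_append] using h2
      · exact h3.suffix ⟨l1, h.symm⟩
    · refine ⟨b :: l, List.nodup_cons.2 ⟨ha, h1⟩, ?_, ?_⟩
      · rw [List.getLast?_cons_cons]; exact h2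
      · exact List.isChain_cons_cons.2 ⟨hab, h3⟩

theorem exists_support_path {V : Type*} [Fintype V] [DecidableEq V] (E : Finset (V × V)) (s t : V)
    (f : V × V → ℝ) (hf : ∀ e ∈ E, 0 ≤ f e)
    (hcons : ∀ v, v ≠ s → v ≠ t → net E f v = 0) (hpos : 0 < net E f s) :
    ∃ P ∈ stPaths (E.filter (fun e => 0 < f e)) s t, True := by
  by_contra hno
  set S := E.filter (fun e => 0 < f e) with hS
  set R : Finset V := Finset.univ.filter
    (fun v => Relation.ReflTransGen (fun x y => (x, y) ∈ S) s v) with hR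
  have hsR : s ∈ R := by simp [hR, Relation.ReflTransGen.refl]
  have htR : t ∉ R := by
    intro ht
    have ht' : Relation.ReflTransGen (fun x y => (x, y) ∈ S) s t := by simpa [hR] using ht
    obtain ⟨l, h1, h2, h3⟩ := exists_path S s t ht'
    exact hno ⟨arcsOf (s :: l), (mem_stPaths _ _ _ _).2
      ⟨(chain_iff_arcs S _).1 h3, s :: l, h1, rfl, h2, rfl⟩, trivial⟩
  have h1 : ∑ v ∈ R, net E f v = net E f s := by
    refine Finset.sum_eq_single_of_mem s hsR ?_
    intro v hv hvs
    exact hcons v hvs (fun h => htR (h ▸ hv))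
  have h2 : ∑ v ∈ R, net E f v ≤ 0 := by
    simp only [net]
    rw [Finset.sum_comm]
    refine Finset.sum_nonpos ?_
    intro e he
    rw [← Finset.mul_sum]
    have h3 : ∑ v ∈ R, inc v e = (if e.1 ∈ R then 1 else 0) - (if e.2 ∈ R then 1 else 0) := by
      simp [inc, Finset.sum_sub_distrib]
    rw [h3]
    by_cases h0 : 0 < f e
    · have : e.1 ∈ R → e.2 ∈ R := by
        intro h
        have h' : Relation.ReflTransGen (fun x y => (x, y) ∈ S) s e.1 := by simpa [hR] using h
        have : Relation.ReflTransGen (fun x y => (x, y) ∈ S) s e.2 :=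
          h'.tail (by simp [hS, he, h0])
        simpa [hR] using this
      by_cases ha : e.1 ∈ R
      · simp [ha, this ha]
      · by_cases hb : e.2 ∈ R <;> simp [ha, hb, h0.le]
    · have : f e = 0 := le_antisymm (not_lt.1 h0) (hf e he)
      simp [this]
  linarith

theorem stPaths_mono {V : Type*} [DecidableEq V] {S T : Finset (V × V)} (h : S ⊆ T) (s t : V) :
    stPaths S s t ⊆ stPaths T s t := by
  intro P hP
  rw [mem_stPaths] at hP ⊢
  exact ⟨hP.1.trans h, hP.2⟩

theorem decomp {V : Type*} [Fintype V] [DecidableEq V] (E S : Finset (V × V)) (s t : V)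
    (hst : s ≠ t) (n : ℕ) :
    ∀ (f : V × V → ℝ), (E.filter (fun e => 0 < f e)).card ≤ n → (∀ e ∈ E, 0 ≤ f e) →
    (∀ e, e ∉ S → f e = 0) →
    (∀ v, v ≠ s → v ≠ t → net E f v = 0) →
    ∃ g : Finset (V × V) → ℝ, (∀ P, 0 ≤ g P) ∧ net E f s ≤ ∑ P ∈ stPaths S s t, g P ∧
      ∀ e ∈ E, ∑ P ∈ (stPaths S s t).filter (fun P => e ∈ P), g P ≤ f e := by
  induction n with
  | zero =>
    intro f hcard hf _ hcons
    refine ⟨fun _ => 0, by simp, ?_, by simpa using hf⟩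
    by_contra hneg
    simp only [Finset.sum_const_zero, not_le] at hneg
    obtain ⟨P, hP, _⟩ := exists_support_path E s t f hf hcons hneg
    have h1 := stPath_nonempty _ s t hst P hP
    have h2 := ((mem_stPaths _ _ _ _).1 hP).1
    have h3 := Finset.card_pos.2 (h1.mono h2)
    omega
  | succ n ih =>
    intro f hcard hf hS hcons
    by_cases hneg : net E f s ≤ 0
    · exact ⟨fun _ => 0, by simp, by simpa using hneg, by simpa using hf⟩
    push Not at hneg
    obtain ⟨P, hP, _⟩ := exists_support_path E s t f hf hcons hneg
    have hne := stPath_nonempty _ s t hst P hP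
    have hPsub := ((mem_stPaths _ _ _ _).1 hP).1
    have hPE : P ∈ stPaths E s t := stPaths_mono (Finset.filter_subset _ _) s t hP
    have hPS : P ∈ stPaths S s t := by
      refine stPaths_mono ?_ s t hP
      intro e he
      by_contra h
      simp [hS e h] at he
    obtain ⟨e0, he0, hmin⟩ := Finset.exists_min_image P f hne
    have he0' := Finset.mem_filter.1 (hPsub he0)
    set f' : V × V → ℝ := fun e => f e - (if e ∈ P then f e0 else 0) with hf'
    have hnet : ∀ v, net E f' v = net E f v
        - f e0 * ((if s = v then 1 else 0) - (if t = v then 1 else 0)) := by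
      intro v
      rw [← net_path E s t v P hPE (f e0)]
      simp only [net, hf', sub_mul, Finset.sum_sub_distrib]
    have hf'0 : ∀ e ∈ E, 0 ≤ f' e := by
      intro e he
      by_cases h : e ∈ P
      · simp [hf', h, hmin e h]
      · simp [hf', h, hf e he]
    have q1 : (E.filter (fun e => 0 < f' e)).card ≤ n := by
      have : E.filter (fun e => 0 < f' e) ⊂ E.filter (fun e => 0 < f e) := by
        rw [Finset.ssubset_iff_of_subset]
        · refine ⟨e0, hPsub he0, ?_⟩
          simp [hf', he0]
        · intro e he
          simp only [Finset.mem_filter, hf'] at he ⊢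
          refine ⟨he.1, ?_⟩
          have := he0'.2
          have h2 := he.2
          split_ifs at h2 <;> linarith
      have := Finset.card_lt_card this
      omega
    have q2 : ∀ e, e ∉ S → f' e = 0 := by
      intro e he
      have : e ∉ P := fun h => he (((mem_stPaths _ _ _ _).1 hPS).1 h)
      simp [hf', this, hS e he]
    have q3 : ∀ v, v ≠ s → v ≠ t → net E f' v = 0 := by
      intro v hvs hvt
      rw [hnet, hcons v hvs hvt]
      simp [hvs.symm, hvt.symm]
    obtain ⟨g, hg0, hg1, hg2⟩ := ih f' q1 hf'0 q2 q3
    · refine ⟨fun Q => g Q + if Q = P then f e0 else 0, ?_, ?_, ?_⟩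
      · intro Q
        have := hg0 Q
        have := he0'.2
        simp only
        split_ifs <;> linarith
      · rw [Finset.sum_add_distrib, Finset.sum_ite_eq' , if_pos hPS]
        have := hnet s
        simp [hst.symm] at this
        linarith
      · intro e he
        have := hg2 e he
        rw [Finset.sum_add_distrib, Finset.sum_ite_eq']
        simp only [Finset.mem_filter, hPS, true_and]
        simp only [hf'] at this
        linarith

theorem flow_decomp {V : Type*} [Fintype V] [DecidableEq V] (E S : Finset (V × V))
    (c : V × V → ℝ) (s t : V)
    (hst : s ≠ t) (hSE : S ⊆ E) (f : V × V → ℝ) (hf : IsFeasibleFlow E c s t S f) :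
    ∃ g : Finset (V × V) → ℝ, flowValue E s f ≤ ∑ P ∈ stPaths S s t, g P ∧
      (∀ P ∈ stPaths S s t, g P ≤ pathCap c P) ∧
      ∀ e ∈ E, ∑ P ∈ (stPaths S s t).filter (fun P => e ∈ P), g P ≤ c e := by
  obtain ⟨h1, h2, h3⟩ := hf
  obtain ⟨g, hg0, hg1, hg2⟩ := decomp E S s t hst _ f le_rfl (fun e he => (h1 e he).1) h2
    (fun v hs ht => by rw [net_eq, h3 v hs ht, sub_self])
  have hg3 : ∀ e ∈ E, ∑ P ∈ (stPaths S s t).filter (fun P => e ∈ P), g P ≤ c e :=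
    fun e he => (hg2 e he).trans (h1 e he).2
  refine ⟨g, by rw [net_eq] at hg1; exact hg1, ?_, hg3⟩
  intro P hP
  have hne := stPath_nonempty _ s t hst P hP
  refine le_csInf ?_ ?_
  · exact Set.Nonempty.image _ (by simpa using hne)
  · rintro _ ⟨e, he, rfl⟩
    have he : e ∈ P := by simpa using he
    refine le_trans ?_ (hg3 e (hSE (((mem_stPaths _ _ _ _).1 hP).1 he)))
    exact Finset.single_le_sum (f := g) (fun Q _ => hg0 Q) (Finset.mem_filter.2 ⟨hP, he⟩)

theorem gamma_le {V : Type*} [Fintype V] [DecidableEq V] (E S : Finset (V × V))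
    (c : V × V → ℝ) (s t : V) (γ : Finset (V × V) → ℝ)
    (hst : s ≠ t) (hγ : IsFlowGame E c s t γ) (hSE : S ⊆ E) :
    γ S ≤ ∑ P ∈ stPaths S s t, pathCap c P := by
  obtain ⟨f, hf, hv⟩ := (hγ S hSE).1
  obtain ⟨g, h1, h2, _⟩ := flow_decomp E S c s t hst hSE f hf
  rw [← hv]
  exact h1.trans (Finset.sum_le_sum h2)

theorem gamma_ge_path {V : Type*} [Fintype V] [DecidableEq V] (E S : Finset (V × V))
    (c : V × V → ℝ) (s t : V) (γ : Finset (V × V) → ℝ)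
    (hst : s ≠ t) (hc : ∀ e ∈ E, 0 < c e) (hγ : IsFlowGame E c s t γ) (hSE : S ⊆ E)
    (P : Finset (V × V)) (hP : P ∈ stPaths S s t) :
    pathCap c P ≤ γ S := by
  have hPE := stPaths_mono hSE s t hP
  have hsub := ((mem_stPaths _ _ _ _).1 hP).1
  have hsubE := hsub.trans hSE
  have hne := stPath_nonempty _ s t hst P hP
  have hnn : 0 ≤ pathCap c P := by
    refine le_csInf (Set.Nonempty.image _ (by simpa using hne)) ?_
    rintro _ ⟨e, he, rfl⟩
    exact (hc e (hsubE (by simpa using he))).le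
  have hle : ∀ e ∈ P, pathCap c P ≤ c e := by
    intro e he
    refine csInf_le ?_ ⟨e, by simpa using he, rfl⟩
    refine ⟨0, ?_⟩
    rintro _ ⟨e, he, rfl⟩
    exact (hc e (hsubE (by simpa using he))).le
  refine (hγ S hSE).2 ⟨fun e => if e ∈ P then pathCap c P else 0, ⟨?_, ?_, ?_⟩, ?_⟩
  · intro e he
    by_cases h : e ∈ P
    · simp [h, hnn, hle e h]
    · simp [h, (hc e he).le]
  · intro e he
    have : e ∉ P := fun h => he (hsub h)
    simp [this]
  · intro v hs ht
    have h1 := net_path E s t v P hPE (pathCap c P)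
    have h2 := net_eq E (fun e => if e ∈ P then pathCap c P else 0) v
    simp only [hs.symm, ht.symm, if_false, sub_zero, mul_zero] at h1
    linarith
  · have h1 := net_path E s t s P hPE (pathCap c P)
    have h2 := net_eq E (fun e => if e ∈ P then pathCap c P else 0) s
    simp only [hst.symm, if_false, sub_zero, if_true, mul_one] at h1
    exact h2.symm.trans h1

theorem gamma_nonneg {V : Type*} [Fintype V] [DecidableEq V] (E S : Finset (V × V))
    (c : V × V → ℝ) (s t : V) (γ : Finset (V × V) → ℝ)
    (hc : ∀ e ∈ E, 0 < c e) (hγ : IsFlowGame E c s t γ) (hSE : S ⊆ E) :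
    0 ≤ γ S := by
  refine (hγ S hSE).2 ⟨fun _ => 0, ⟨?_, ?_, ?_⟩, ?_⟩
  · intro e he
    exact ⟨le_rfl, (hc e he).le⟩
  · simp
  · simp
  · simp [flowValue]

theorem stPaths_erase {V : Type*} [DecidableEq V] (S : Finset (V × V)) (s t : V) (e : V × V) :
    stPaths (S.erase e) s t = (stPaths S s t).filter (fun P => e ∉ P) := by
  ext P
  rw [Finset.mem_filter, mem_stPaths, mem_stPaths, Finset.subset_erase]
  tauto

theorem diverge {V : Type*} [DecidableEq V] (S : Finset (V × V)) (s t : V)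
    (P Q : Finset (V × V)) (hP : P ∈ stPaths S s t) (hQ : Q ∈ stPaths S s t) (hPQ : P ≠ Q) :
    ∃ e ∈ S, ∃ e' ∈ S, e ≠ e' ∧ ∀ R ∈ stPaths S s t, e ∈ R → e' ∉ R := by
  obtain ⟨hPS, l1, h1, h2, h3, h4⟩ := (mem_stPaths _ _ _ _).1 hP
  obtain ⟨hQS, l2, k1, k2, k3, k4⟩ := (mem_stPaths _ _ _ _).1 hQ
  cases l1 with
  | nil => simp at h2
  | cons a l1 =>
  cases l2 with
  | nil => simp at k2
  | cons b l2 =>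
  simp only [List.head?_cons, Option.some.injEq] at h2 k2
  subst h2
  subst k2
  rcases arcs_diverge t l1 b l2 h1 k1 h3 k3 with h | ⟨v, w, w', hw, m, m'⟩
  · rw [h] at h4
    exact absurd (h4.trans k4.symm) hPQ
  · refine ⟨(v, w), hPS (h4 ▸ m), (v, w'), hQS (k4 ▸ m'), by simp [hw], ?_⟩
    intro R hR hr hr'
    obtain ⟨_, l, j1, _, _, j4⟩ := (mem_stPaths _ _ _ _).1 hR
    rw [j4] at hr hr'
    exact hw (arcs_tail_unique l j1 v w w' hr hr')

theorem gamma_ge {V : Type*} [Fintype V] [DecidableEq V] (E : Finset (V × V))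
    (c : V × V → ℝ) (s t : V) (γ : Finset (V × V) → ℝ)
    (hst : s ≠ t) (hc : ∀ e ∈ E, 0 < c e) (hγ : IsFlowGame E c s t γ)
    (hconv : GameConvex E γ) (S : Finset (V × V)) : S ⊆ E →
    ∑ P ∈ stPaths S s t, pathCap c P ≤ γ S := by
  induction S using Finset.strongInduction with
  | H S ih =>
  intro hSE
  by_cases hone : ∃ P ∈ stPaths S s t, ∃ Q ∈ stPaths S s t, P ≠ Q
  · obtain ⟨P, hP, Q, hQ, hPQ⟩ := hone
    obtain ⟨e, he, e', he', hne, hR⟩ := diverge S s t P Q hP hQ hPQ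
    have i1 := ih (S.erase e) (Finset.erase_ssubset he) ((Finset.erase_subset _ _).trans hSE)
    have i2 := ih (S.erase e') (Finset.erase_ssubset he') ((Finset.erase_subset _ _).trans hSE)
    have i3 := gamma_le E ((S.erase e').erase e) c s t γ hst hγ
      ((Finset.erase_subset _ _).trans ((Finset.erase_subset _ _).trans hSE))
    have i4 := hconv e (hSE he) ((S.erase e').erase e) (S.erase e)
      (Finset.erase_subset_erase _ (Finset.erase_subset _ _)) (Finset.erase_subset_erase _ hSE)
    rw [Finset.insert_erase (Finset.mem_erase.2 ⟨hne, he⟩), Finset.insert_erase he] at i4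
    rw [stPaths_erase] at i1 i2
    rw [stPaths_erase, stPaths_erase, Finset.filter_filter] at i3
    rw [Finset.sum_filter] at i1 i2 i3
    have i5 : ∑ P ∈ stPaths S s t, pathCap c P
        = ∑ P ∈ stPaths S s t, (if e ∉ P then pathCap c P else 0)
        + ∑ P ∈ stPaths S s t, (if e' ∉ P then pathCap c P else 0)
        - ∑ P ∈ stPaths S s t, (if e' ∉ P ∧ e ∉ P then pathCap c P else 0) := by
      rw [← Finset.sum_add_distrib, ← Finset.sum_sub_distrib]
      refine Finset.sum_congr rfl ?_
      intro R hR'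
      have := hR R hR'
      by_cases h1 : e ∈ R
      · simp [h1, this h1]
      · by_cases h2 : e' ∈ R <;> simp [h1, h2]
    linarith
  · push Not at hone
    rcases (stPaths S s t).eq_empty_or_nonempty with h | ⟨P, hP⟩
    · rw [h, Finset.sum_empty]
      exact gamma_nonneg E S c s t γ hc hγ hSE
    · have : stPaths S s t = {P} := by
        ext Q
        rw [Finset.mem_singleton]
        exact ⟨fun h => hone Q h P hP, fun h => h ▸ hP⟩
      have h2 := gamma_ge_path E S c s t γ hst hc hγ hSE P hP
      rw [this, Finset.sum_singleton]
      exact h2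

/-- Non-bottleneck sufficiency.  If every arc lies on some `s`-`t` path
and the flow game is convex, then every non-bottleneck arc `e` satisfies
`c(e) ≥ Σ_{P ∈ 𝒫_e} c(P)`. -/
theorem non_bottleneck_sufficiency
    {V : Type*} [Fintype V] [DecidableEq V]
    (E : Finset (V × V)) (c : V × V → ℝ) (s t : V) (γ : Finset (V × V) → ℝ)
    (hst : s ≠ t) (hc : ∀ e ∈ E, 0 < c e)
    (hγ : IsFlowGame E c s t γ)
    (hcover : ∀ e ∈ E, ∃ P : Finset (V × V), IsSTPath E s t P ∧ e ∈ P)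
    (hconv : GameConvex E γ) :
    ∀ e ∈ E, ¬ IsBottleneck E c s t e →
      ∑ P ∈ (stPaths E s t).filter (fun P => e ∈ P), pathCap c P ≤ c e := by
  intro e he _
  obtain ⟨f, hf, hv⟩ := (hγ E subset_rfl).1
  obtain ⟨g, h1, h2, h3⟩ := flow_decomp E E c s t hst subset_rfl f hf
  have h4 := gamma_ge E c s t γ hst hc hγ hconv E subset_rfl
  rw [← hv] at h4
  have h5 : ∀ P ∈ stPaths E s t, g P = pathCap c P :=
    (Finset.sum_eq_sum_iff_of_le h2).1 (le_antisymm (Finset.sum_le_sum h2) (h4.trans h1))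
  refine le_trans (le_of_eq ?_) (h3 e he)
  exact Finset.sum_congr rfl (fun P hP => (h5 P (Finset.mem_filter.1 hP).1).symm)
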